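/- For every integer n ≥ 1, the function χ_n(z) = −ψ_{2n}(z;N) + (1 − a_{2n−1}(N))·ψ_{2n−1}(z;N) (which equals (z − z^{−1}) times the sieved Jacobi polynomial of the second kind Q_{n−1} in the variable x = z + 1/z) satisfies, for all z ∈ ℂ with z ≠ 0 and z^{2N} ≠ 1, the eigenvalue equation (L(N)(L(N)χ_n))(z) − N(α+β+1)·(L(N)χ_n)(z) = n·(n + N(α+β+1))·χ_n(z). -/

import Mathlib

open Finset

/-- Monic OPUC associated to a sequence of (real) Verblunsky parameters. -/
noncomputable def Phi (c : ℕ → ℝ) : ℕ → ℂ → ℂ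
  | 0, _ => 1
  | n + 1, z => z * Phi c n z - (c n : ℂ) * z ^ n * Phi c n z⁻¹

/-- CMV Laurent polynomials: ψ_{2m} z = z^m Φ_{2m}(1/z), ψ_{2m+1} z = z^{-m} Φ_{2m+1}(z). -/
noncomputable def psi (c : ℕ → ℝ) (n : ℕ) (z : ℂ) : ℂ :=
  if Even n then z ^ (n / 2) * Phi c n z⁻¹
  else z ^ (-((n / 2 : ℕ) : ℤ)) * Phi c n z

/-- Verblunsky parameters of the Jacobi OPUC. -/
noncomputable def jacobiA (α β : ℝ) (n : ℕ) : ℝ :=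
  -(α + 1 / 2 + (-1 : ℝ) ^ (n + 1) * (β + 1 / 2)) / (n + α + β + 2)

/-- Sieved Verblunsky parameters: a_n(N) = a_{k-1} if n = N k - 1 (k ≥ 1), 0 otherwise. -/
noncomputable def sievedA (α β : ℝ) (N n : ℕ) : ℝ :=
  if N ∣ (n + 1) then jacobiA α β ((n + 1) / N - 1) else 0

/-- The primitive N-th root of unity q = exp(2πi/N). -/
noncomputable def qN (N : ℕ) : ℂ := Complex.exp (2 * Real.pi * Complex.I / N)

/-- The coefficients A_k(z;N) of the Dunkl-type operator L(N). -/
noncomputable def Acoef (α β : ℝ) (N k : ℕ) (z : ℂ) : ℂ :=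
  if Even N then
    ((α : ℂ) + β + 1 + (-1 : ℂ) ^ k * ((α : ℂ) - β)) * z ^ 2 / (qN N ^ k - z ^ 2)
  else
    (((α : ℂ) + β + 1) * z ^ 2 +
        (if Even k then qN N ^ ((k : ℤ) / 2) else qN N ^ (((k : ℤ) - (N : ℤ)) / 2)) *
          ((α : ℂ) - β) * z) /
      (qN N ^ k - z ^ 2)

/-- B(z) = N((α+β+1) z^{2N} + (α-β) z^N)/(z^{2N} - 1). -/
noncomputable def Bfun (α β : ℝ) (N : ℕ) (z : ℂ) : ℂ :=
  (N : ℂ) * (((α : ℂ) + β + 1) * z ^ (2 * N) + ((α : ℂ) - β) * z ^ N) / (z ^ (2 * N) - 1)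

/-- The Dunkl-type operator L(N). -/
noncomputable def Lop (α β : ℝ) (N : ℕ) (f : ℂ → ℂ) : ℂ → ℂ := fun z =>
  z * deriv f z + ∑ k ∈ Finset.range N, Acoef α β N k z * (f (qN N ^ k / z) - f z)

/-- A function ℂ∖{0} → ℂ is a Laurent polynomial. -/
def IsLaurentPoly (f : ℂ → ℂ) : Prop :=
  ∃ (m : ℕ) (p : Polynomial ℂ), ∀ z : ℂ, z ≠ 0 → f z = Polynomial.eval z p / z ^ m

/-- Sieved Jacobi polynomial of the first kind, as a function of z (x = z + 1/z). -/
noncomputable def sievP (α β : ℝ) (N n : ℕ) (z : ℂ) : ℂ :=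
  psi (sievedA α β N) (2 * n) z
    + (1 + (sievedA α β N (2 * n - 1) : ℂ)) * psi (sievedA α β N) (2 * n - 1) z

/-- χ_n(z) = (z - 1/z) Q_{n-1}(x(z)), with Q the sieved Jacobi polynomial of 2nd kind. -/
noncomputable def sievChi (α β : ℝ) (N n : ℕ) (z : ℂ) : ℂ :=
  -psi (sievedA α β N) (2 * n) z
    + (1 - (sievedA α β N (2 * n - 1) : ℂ)) * psi (sievedA α β N) (2 * n - 1) z

/-!
Composition with `z ↦ 1/z` intertwines `L(1)` with an affine function of `-L(1)`, and so does
`f ↦ z f(1/z)`. Hence each step of the CMV recurrence sends an eigenfunction of `L(1)` to an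
eigenfunction, the Jacobi parameters `a_n` being exactly the numbers that make this work:
`L(1) ψ_{2p} = -p ψ_{2p}` and `L(1) ψ_{2p+1} = (p + 1 + σ) ψ_{2p+1}` with `σ = α + β + 1`.

Sieving turns `ψ_m` into `z^s ψ_m(z^{±N})`, and `χ_n` is the antisymmetrization of such a function
under `z ↦ 1/z`. If `L(1) G = l G` and `0 ≤ 2r ≤ N`, the functions `z^{-r} G(z^N)` and
`z^r G(z^{-N})` span an `L(N)`-invariant plane on which the matrix of `L(N)` is triangular with
diagonal entries `Nl - r` and `Nσ - (Nl - r)`. The eigenvalue equation for `χ_n` is the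
Cayley–Hamilton identity on this plane.
-/

section RootsOfUnity

variable {K : Type*} [Field K] {ζ x : K} {N : ℕ}

lemma sum_pow_pow_of_isPrimitiveRoot (hζ : IsPrimitiveRoot ζ N) (j : ℕ) :
    ∑ k ∈ range N, (ζ ^ k) ^ j = if N ∣ j then (N : K) else 0 := by
  simp only [pow_right_comm ζ _ j]
  split_ifs with hj
  · simp [(hζ.pow_eq_one_iff_dvd j).2 hj]
  · have hne : ζ ^ j ≠ 1 := mt (hζ.pow_eq_one_iff_dvd j).1 hj
    rw [geom_sum_eq hne, pow_right_comm, hζ.pow_eq_one, one_pow, sub_self, zero_div]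

lemma pow_succ_div_sub_eq_sum (hζ : ζ ^ N = 1) (hx : x ^ N ≠ 1) (s : ℕ) :
    ζ ^ (s + 1) / (ζ - x) = -(∑ i ∈ range N, x ^ i * ζ ^ (s + (N - i))) / (x ^ N - 1) := by
  have hne : ζ - x ≠ 0 := fun h => hx (sub_eq_zero.1 h ▸ hζ)
  have hgeom := (Commute.all x ζ).geom_sum₂_mul N
  have hsum : ∑ i ∈ range N, x ^ i * ζ ^ (s + (N - i)) =
      ζ ^ (s + 1) * ∑ i ∈ range N, x ^ i * ζ ^ (N - 1 - i) := by
    rw [mul_sum]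
    refine sum_congr rfl fun i hi => ?_
    have hi := mem_range.1 hi
    rw [show s + (N - i) = s + 1 + (N - 1 - i) by omega, pow_add]
    ring
  rw [hζ] at hgeom
  rw [hsum, div_eq_div_iff hne (sub_ne_zero.2 hx), ← hgeom]
  ring

lemma sum_pow_succ_div_sub_of_isPrimitiveRoot (hζ : IsPrimitiveRoot ζ N) (hx : x ^ N ≠ 1)
    {s : ℕ} (hs : s < N) :
    ∑ k ∈ range N, (ζ ^ k) ^ (s + 1) / (ζ ^ k - x) = -(N * x ^ s) / (x ^ N - 1) := by
  have hroot (k : ℕ) : (ζ ^ k) ^ N = 1 := by rw [pow_right_comm, hζ.pow_eq_one, one_pow]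
  have hdvd {i : ℕ} (hi : i ∈ range N) : N ∣ s + (N - i) ↔ i = s := by
    have hi := mem_range.1 hi
    refine ⟨fun h => ?_, fun h => ⟨1, by omega⟩⟩
    have := Nat.eq_of_dvd_of_lt_two_mul (by omega) h (by omega)
    omega
  simp only [pow_succ_div_sub_eq_sum (hroot _) hx, ← sum_div, sum_neg_distrib]
  rw [sum_comm]
  simp only [← mul_sum, sum_pow_pow_of_isPrimitiveRoot hζ]
  rw [sum_congr rfl fun i hi => by rw [if_congr (hdvd hi) rfl rfl]]
  simp [hs, mul_comm]

lemma ite_zpow_half_eq_pow_half (hζ : ζ ^ N = 1) (hN : Odd N) (k : ℕ) :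
    (if Even k then ζ ^ ((k : ℤ) / 2) else ζ ^ (((k : ℤ) - N) / 2)) =
      (ζ ^ k) ^ ((N + 1) / 2) := by
  obtain ⟨h, rfl⟩ := hN
  have hζ0 : ζ ≠ 0 := by rintro rfl; simp at hζ
  have hcongr (i j t : ℤ) (hij : i = j + ((2 * h + 1 : ℕ) : ℤ) * t) : ζ ^ i = ζ ^ j := by
    rw [hij, zpow_add₀ hζ0, zpow_mul, zpow_natCast, hζ, one_zpow, mul_one]
  rw [show (2 * h + 1 + 1) / 2 = h + 1 by omega, ← pow_mul, ← zpow_natCast]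
  split_ifs with hk
  · obtain ⟨j, rfl⟩ := hk
    refine (hcongr _ _ j ?_).symm
    rw [show ((j + j : ℕ) : ℤ) / 2 = j by omega]
    push_cast
    ring
  · obtain ⟨j, rfl⟩ := Nat.not_even_iff_odd.1 hk
    refine (hcongr _ _ (j + 1) ?_).symm
    rw [show (((2 * j + 1 : ℕ) : ℤ) - (2 * h + 1 : ℕ)) / 2 = j - h by omega]
    push_cast
    ring

end RootsOfUnity

lemma isPrimitiveRoot_qN {N : ℕ} (hN : N ≠ 0) : IsPrimitiveRoot (qN N) N :=
  Complex.isPrimitiveRoot_exp N hN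

lemma qN_ne_zero (N : ℕ) : qN N ≠ 0 := Complex.exp_ne_zero _

lemma qN_pow_pow_eq_one (N k : ℕ) : (qN N ^ k) ^ N = 1 := by
  rcases eq_or_ne N 0 with rfl | hN
  · exact pow_zero _
  · rw [pow_right_comm, (isPrimitiveRoot_qN hN).pow_eq_one, one_pow]

/-- The points of `ℂ ∖ {0}` at which no coefficient of `L(N)` has a pole. -/
def regularSet (N : ℕ) : Set ℂ := {z | z ≠ 0 ∧ z ^ (2 * N) ≠ 1}

section RegularSet

variable {N : ℕ} {z : ℂ}

lemma isOpen_regularSet (N : ℕ) : IsOpen (regularSet N) :=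
  isOpen_ne.inter (isOpen_ne.preimage (continuous_pow (2 * N)))

lemma ne_zero_of_mem_regularSet (hz : z ∈ regularSet N) : N ≠ 0 := by
  rintro rfl
  exact hz.2 (pow_zero z)

lemma pow_mem_regularSet_one (hz : z ∈ regularSet N) : z ^ N ∈ regularSet 1 :=
  ⟨pow_ne_zero N hz.1, by rw [← pow_mul, mul_one, mul_comm]; exact hz.2⟩

lemma inv_mem_regularSet (hz : z ∈ regularSet N) : z⁻¹ ∈ regularSet N :=
  ⟨inv_ne_zero hz.1, by rw [inv_pow]; exact inv_ne_one.2 hz.2⟩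

lemma qN_pow_div_mem_regularSet (hz : z ∈ regularSet N) (k : ℕ) :
    qN N ^ k / z ∈ regularSet N := by
  refine ⟨div_ne_zero (pow_ne_zero k (qN_ne_zero N)) hz.1, ?_⟩
  rw [div_pow, pow_mul', qN_pow_pow_eq_one, one_pow, one_div]
  exact inv_ne_one.2 hz.2

end RegularSet

section Coefficients

variable (α β : ℝ) {N : ℕ} {z : ℂ}

/- Both parities of `N` give the same formula once `(-1) ^ k` and `ρ_k` are recognised as
`(q ^ k) ^ ⌈N / 2⌉`; the exponent `N + 2 - 2 * ⌈N / 2⌉` of `z` is `2` or `1`. -/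
lemma Acoef_eq (hN : N ≠ 0) (k : ℕ) (z : ℂ) :
    Acoef α β N k z = (((α : ℂ) + β + 1) * z ^ 2 +
      ((α : ℂ) - β) * ((qN N ^ k) ^ ((N + 1) / 2) * z ^ (N + 2 - 2 * ((N + 1) / 2)))) /
        (qN N ^ k - z ^ 2) := by
  have hq := isPrimitiveRoot_qN hN
  rw [Acoef]
  by_cases hE : Even N
  · rw [if_pos hE]
    obtain ⟨h, rfl⟩ := hE
    have hneg : qN (h + h) ^ h = -1 :=
      (hq.pow (b := 2) (by omega) (by omega)).eq_neg_one_of_two_right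
    rw [show (h + h + 1) / 2 = h by omega, show h + h + 2 - 2 * h = 2 by omega,
      pow_right_comm, hneg]
    ring
  · have hO := Nat.not_even_iff_odd.1 hE
    rw [if_neg hE, ite_zpow_half_eq_pow_half hq.pow_eq_one hO,
      show N + 2 - 2 * ((N + 1) / 2) = 1 by obtain ⟨h, rfl⟩ := hO; omega]
    ring

/-- The sum `∑ A_k q^{ks}`, through which `L(N)` acts on the monomials `z^s` and, more generally,
on the functions `z^s F(z^N)`. -/
noncomputable def coefMoment (N : ℕ) (s : ℤ) (z : ℂ) : ℂ :=
  ∑ k ∈ range N, Acoef α β N k z * (qN N ^ k) ^ s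

/- The two residues enter because the partial fraction sum is a monomial only for exponents
between `1` and `N`. -/
lemma coefMoment_eq_of_modEq (hz : z ∈ regularSet N) {s : ℤ} {a b : ℕ}
    (ha : s ≡ a + 1 [ZMOD N]) (ha' : a < N)
    (hb : s + ((N + 1) / 2 : ℕ) ≡ b + 1 [ZMOD N]) (hb' : b < N) :
    coefMoment α β N s z =
      -(N * (((α : ℂ) + β + 1) * z ^ (2 * a + 2) +
        ((α : ℂ) - β) * z ^ (N + 2 - 2 * ((N + 1) / 2) + 2 * b))) / (z ^ (2 * N) - 1) := by
  have hN := ne_zero_of_mem_regularSet hz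
  have hζ := isPrimitiveRoot_qN hN
  have hx : (z ^ 2) ^ N ≠ 1 := by rw [← pow_mul]; exact hz.2
  have hreduce (k : ℕ) {i : ℤ} {j : ℕ} (hij : i ≡ j + 1 [ZMOD N]) :
      (qN N ^ k) ^ i = (qN N ^ k) ^ (j + 1) := by
    obtain ⟨t, ht⟩ := hij.symm.dvd
    rw [sub_eq_iff_eq_add.1 ht, zpow_add₀ (pow_ne_zero k (qN_ne_zero N)), zpow_mul, zpow_natCast,
      qN_pow_pow_eq_one, one_zpow, one_mul]
    exact_mod_cast zpow_natCast (qN N ^ k) (j + 1)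
  have hsplit : coefMoment α β N s z =
      ((α : ℂ) + β + 1) * z ^ 2 *
        ∑ k ∈ range N, (qN N ^ k) ^ (a + 1) / (qN N ^ k - z ^ 2) +
      ((α : ℂ) - β) * z ^ (N + 2 - 2 * ((N + 1) / 2)) *
        ∑ k ∈ range N, (qN N ^ k) ^ (b + 1) / (qN N ^ k - z ^ 2) := by
    rw [coefMoment, mul_sum, mul_sum, ← sum_add_distrib]
    refine sum_congr rfl fun k _ => ?_
    rw [Acoef_eq α β hN, ← hreduce k ha, ← hreduce k hb,
      zpow_add₀ (pow_ne_zero k (qN_ne_zero N)), zpow_natCast]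
    ring
  rw [hsplit, sum_pow_succ_div_sub_of_isPrimitiveRoot hζ hx ha',
    sum_pow_succ_div_sub_of_isPrimitiveRoot hζ hx hb', ← pow_mul, pow_add z _ (2 * b)]
  ring

lemma coefMoment_neg_natCast (hz : z ∈ regularSet N) {r : ℕ} (hr : 2 * r ≤ N) :
    coefMoment α β N (-r) z =
      z ^ (2 * (-r : ℤ)) *
        ((if 2 * r = N then -(N * ((α : ℂ) - β) * z ^ N) else 0) - Bfun α β N z) := by
  have hN := ne_zero_of_mem_regularSet hz
  have hd : z ^ (2 * N) - 1 ≠ 0 := sub_ne_zero.2 hz.2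
  have hza : z ^ (2 * (N - r - 1) + 2) = z ^ (2 * (-r : ℤ)) * z ^ (2 * N) := by
    rw [← zpow_natCast, ← zpow_natCast, ← zpow_add₀ hz.1]
    congr 1
    omega
  have ha : (-r : ℤ) ≡ (N - r - 1 : ℕ) + 1 [ZMOD N] := Int.modEq_iff_dvd.2 ⟨1, by omega⟩
  rw [Bfun]
  split_ifs with h
  · have hb : (-r : ℤ) + ((N + 1) / 2 : ℕ) ≡ (N - 1 : ℕ) + 1 [ZMOD N] :=
      Int.modEq_iff_dvd.2 ⟨1, by omega⟩
    rw [coefMoment_eq_of_modEq α β hz ha (by omega) hb (by omega), hza,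
      show N + 2 - 2 * ((N + 1) / 2) + 2 * (N - 1) = 2 * N by omega]
    have hzr : z ^ (2 * (-r : ℤ)) * z ^ N = 1 := by
      rw [← zpow_natCast, ← zpow_add₀ hz.1, ← h]
      simp
    rw [pow_mul'] at hd ⊢
    field_simp
    linear_combination ((α : ℂ) - β) * (z ^ N) ^ 2 * hzr
  · have hb : (-r : ℤ) + ((N + 1) / 2 : ℕ) ≡ ((N + 1) / 2 - r - 1 : ℕ) + 1 [ZMOD N] :=
      Int.modEq_iff_dvd.2 ⟨0, by omega⟩
    have hzb : z ^ (N + 2 - 2 * ((N + 1) / 2) + 2 * ((N + 1) / 2 - r - 1)) =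
        z ^ (2 * (-r : ℤ)) * z ^ N := by
      rw [← zpow_natCast, ← zpow_natCast, ← zpow_add₀ hz.1]
      congr 1
      omega
    rw [coefMoment_eq_of_modEq α β hz ha (by omega) hb (by omega), hza, hzb]
    ring

lemma coefMoment_natCast (hz : z ∈ regularSet N) {r : ℕ} (hr : 2 * r ≤ N) :
    coefMoment α β N r z =
      z ^ (2 * (r : ℤ)) * ((if r = 0 then 0 else N * ((α : ℂ) + β + 1)) - Bfun α β N z) := by
  rcases r.eq_zero_or_pos with rfl | hr'
  · simpa [(ne_zero_of_mem_regularSet hz).symm] using coefMoment_neg_natCast α β hz hr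
  have hd : z ^ (2 * N) - 1 ≠ 0 := sub_ne_zero.2 hz.2
  have ha : (r : ℤ) ≡ (r - 1 : ℕ) + 1 [ZMOD N] := Int.modEq_iff_dvd.2 ⟨0, by omega⟩
  have hb : (r : ℤ) + ((N + 1) / 2 : ℕ) ≡ (r + (N + 1) / 2 - 1 : ℕ) + 1 [ZMOD N] :=
    Int.modEq_iff_dvd.2 ⟨0, by omega⟩
  rw [coefMoment_eq_of_modEq α β hz ha (by omega) hb (by omega), Bfun, if_neg hr'.ne',
    show N + 2 - 2 * ((N + 1) / 2) + 2 * (r + (N + 1) / 2 - 1) = 2 * r + N by omega,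
    show 2 * (r - 1) + 2 = 2 * r by omega, pow_add, ← zpow_natCast z (2 * r)]
  push_cast
  field_simp
  ring

end Coefficients

section Operator

variable {α β : ℝ} {N : ℕ} {f g F : ℂ → ℂ} {l w z : ℂ}

lemma Lop_congr (hfg : Set.EqOn f g (regularSet N)) (hz : z ∈ regularSet N) :
    Lop α β N f z = Lop α β N g z := by
  have hev : f =ᶠ[nhds z] g := Filter.eventuallyEq_of_mem ((isOpen_regularSet N).mem_nhds hz) hfg
  rw [Lop, Lop, hev.deriv_eq, hfg hz]
  congr 1
  exact sum_congr rfl fun k _ => by rw [hfg (qN_pow_div_mem_regularSet hz k)]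

lemma Lop_const_mul_add_const_mul (a b : ℂ) (hf : DifferentiableAt ℂ f z)
    (hg : DifferentiableAt ℂ g z) :
    Lop α β N (fun y => a * f y + b * g y) z = a * Lop α β N f z + b * Lop α β N g z := by
  have hd : deriv (fun y => a * f y + b * g y) z = a * deriv f z + b * deriv g z :=
    ((hf.hasDerivAt.const_mul a).add (hg.hasDerivAt.const_mul b)).deriv
  have hsum : ∑ k ∈ range N, Acoef α β N k z *
        (a * f (qN N ^ k / z) + b * g (qN N ^ k / z) - (a * f z + b * g z)) =
      a * ∑ k ∈ range N, Acoef α β N k z * (f (qN N ^ k / z) - f z) +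
        b * ∑ k ∈ range N, Acoef α β N k z * (g (qN N ^ k / z) - g z) := by
    rw [mul_sum, mul_sum, ← sum_add_distrib]
    exact sum_congr rfl fun k _ => by ring
  rw [Lop, Lop, Lop, hd, hsum]
  ring

/- Cayley–Hamilton for the matrix `!![a, μ; κ, b]` of `L(N)` on the span of `f` and `g`. -/
lemma Lop_Lop_sub_trace_mul_Lop {a b κ μ x y : ℂ} {u : ℂ → ℂ}
    (hf : DifferentiableOn ℂ f {0}ᶜ) (hg : DifferentiableOn ℂ g {0}ᶜ)
    (hLf : ∀ z ∈ regularSet N, Lop α β N f z = a * f z + κ * g z)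
    (hLg : ∀ z ∈ regularSet N, Lop α β N g z = b * g z + μ * f z)
    (hu : Set.EqOn u (fun z => x * f z + y * g z) (regularSet N)) (hz : z ∈ regularSet N) :
    Lop α β N (Lop α β N u) z - (a + b) * Lop α β N u z = -(a * b - κ * μ) * u z := by
  have hspan {x y : ℂ} {u : ℂ → ℂ}
      (hu : Set.EqOn u (fun z => x * f z + y * g z) (regularSet N)) :
      Set.EqOn (Lop α β N u) (fun z => (x * a + y * μ) * f z + (x * κ + y * b) * g z)
        (regularSet N) := by
    intro z hz
    have hz0 : ({0}ᶜ : Set ℂ) ∈ nhds z := isOpen_compl_singleton.mem_nhds hz.1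
    rw [Lop_congr hu hz, Lop_const_mul_add_const_mul x y (hf.differentiableAt hz0)
      (hg.differentiableAt hz0), hLf z hz, hLg z hz]
    ring
  rw [hspan (hspan hu) hz, hspan hu hz, hu hz]
  ring

lemma Lop_one_apply (F : ℂ → ℂ) (w : ℂ) :
    Lop α β 1 F w = w * deriv F w + Bfun α β 1 w * (F w - F w⁻¹) := by
  simp only [Lop, Acoef, Bfun, Nat.not_even_one, if_false, range_one, sum_singleton, pow_zero,
    Even.zero, if_true, one_div, Nat.cast_zero, Int.zero_ediv, zpow_zero]
  rw [← neg_sub (w ^ 2) 1, div_neg]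
  push_cast
  ring

lemma Bfun_one_add_Bfun_one_inv (hw : w ∈ regularSet 1) :
    Bfun α β 1 w + Bfun α β 1 w⁻¹ = (α : ℂ) + β + 1 := by
  have hw0 := hw.1
  have hd : w ^ 2 - 1 ≠ 0 := sub_ne_zero.2 hw.2
  have hd' : 1 - w ^ 2 ≠ 0 := sub_ne_zero.2 hw.2.symm
  simp only [Bfun, Nat.cast_one, mul_one, pow_one, one_mul]
  field_simp
  ring

lemma Bfun_one_div_add_mul_Bfun_one_inv (hw : w ∈ regularSet 1) :
    Bfun α β 1 w / w + w * Bfun α β 1 w⁻¹ = -((α : ℂ) - β) := by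
  have hw0 := hw.1
  have hd : w ^ 2 - 1 ≠ 0 := sub_ne_zero.2 hw.2
  have hd' : 1 - w ^ 2 ≠ 0 := sub_ne_zero.2 hw.2.symm
  simp only [Bfun, Nat.cast_one, mul_one, pow_one, one_mul]
  field_simp
  ring

lemma Lop_one_comp_inv (hw : w ∈ regularSet 1) (hF : DifferentiableAt ℂ F w⁻¹) :
    Lop α β 1 (fun y => F y⁻¹) w =
      ((α : ℂ) + β + 1) * (F w⁻¹ - F w) - Lop α β 1 F w⁻¹ := by
  have hd : HasDerivAt (fun y => F y⁻¹) (deriv F w⁻¹ * -(w ^ 2)⁻¹) w :=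
    hF.hasDerivAt.comp w (hasDerivAt_inv hw.1)
  have hw0 := hw.1
  rw [Lop_one_apply, Lop_one_apply, hd.deriv, ← Bfun_one_add_Bfun_one_inv hw]
  simp only [inv_inv]
  field_simp
  ring

lemma Lop_one_id_mul_comp_inv (hw : w ∈ regularSet 1) (hF : DifferentiableAt ℂ F w⁻¹) :
    Lop α β 1 (fun y => y * F y⁻¹) w =
      (1 + ((α : ℂ) + β + 1)) * (w * F w⁻¹) + ((α : ℂ) - β) * F w -
        w * Lop α β 1 F w⁻¹ := by
  have hd : HasDerivAt (fun y => y * F y⁻¹)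
      (1 * F w⁻¹ + w * (deriv F w⁻¹ * -(w ^ 2)⁻¹)) w :=
    (hasDerivAt_id w).mul (hF.hasDerivAt.comp w (hasDerivAt_inv hw.1))
  have hw0 := hw.1
  rw [Lop_one_apply, Lop_one_apply, hd.deriv, ← Bfun_one_add_Bfun_one_inv hw,
    ← neg_eq_iff_eq_neg.2 (Bfun_one_div_add_mul_Bfun_one_inv hw)]
  simp only [inv_inv]
  field_simp
  ring

lemma Lop_one_comp_inv_sub_const_mul {c : ℂ} (hF : DifferentiableOn ℂ F {0}ᶜ)
    (hLF : ∀ w ∈ regularSet 1, Lop α β 1 F w = l * F w)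
    (hc : c * ((α : ℂ) + β + 1 - 2 * l) = (α : ℂ) + β + 1) (hw : w ∈ regularSet 1) :
    Lop α β 1 (fun y => F y⁻¹ - c * F y) w =
      ((α : ℂ) + β + 1 - l) * (F w⁻¹ - c * F w) := by
  have hFw := hF.differentiableAt (isOpen_compl_singleton.mem_nhds hw.1)
  have hFw' := hF.differentiableAt (isOpen_compl_singleton.mem_nhds (inv_ne_zero hw.1))
  have hlin := Lop_const_mul_add_const_mul (α := α) (β := β) (N := 1) (f := fun y => F y⁻¹) 1 (-c)
    (hFw'.comp w (differentiableAt_inv hw.1)) hFw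
  simp only [one_mul, neg_mul, ← sub_eq_add_neg] at hlin
  rw [hlin, Lop_one_comp_inv hw hFw', hLF w hw, hLF _ (inv_mem_regularSet hw)]
  linear_combination F w * hc

lemma Lop_one_id_mul_comp_inv_sub_const_mul {c : ℂ} (hF : DifferentiableOn ℂ F {0}ᶜ)
    (hLF : ∀ w ∈ regularSet 1, Lop α β 1 F w = l * F w)
    (hc : c * (1 + ((α : ℂ) + β + 1) - 2 * l) = -((α : ℂ) - β)) (hw : w ∈ regularSet 1) :
    Lop α β 1 (fun y => y * F y⁻¹ - c * F y) w =
      (1 + ((α : ℂ) + β + 1) - l) * (w * F w⁻¹ - c * F w) := by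
  have hFw := hF.differentiableAt (isOpen_compl_singleton.mem_nhds hw.1)
  have hFw' := hF.differentiableAt (isOpen_compl_singleton.mem_nhds (inv_ne_zero hw.1))
  have hlin := Lop_const_mul_add_const_mul (α := α) (β := β) (N := 1)
    (f := fun y => y * F y⁻¹) 1 (-c)
    (differentiableAt_id.mul (hFw'.comp w (differentiableAt_inv hw.1))) hFw
  simp only [one_mul, neg_mul, ← sub_eq_add_neg] at hlin
  rw [hlin, Lop_one_id_mul_comp_inv hw hFw', hLF w hw, hLF _ (inv_mem_regularSet hw)]
  linear_combination F w * hc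

end Operator

section CMV

variable (c : ℕ → ℝ) (p : ℕ) {z : ℂ}

lemma psi_zero (z : ℂ) : psi c 0 z = 1 := by
  simp [psi, Phi]

lemma psi_two_mul (z : ℂ) : psi c (2 * p) z = z ^ p * Phi c (2 * p) z⁻¹ := by
  rw [psi, if_pos (even_two_mul p), Nat.mul_div_cancel_left p two_pos]

lemma psi_two_mul_add_one (z : ℂ) :
    psi c (2 * p + 1) z = (z ^ p)⁻¹ * Phi c (2 * p + 1) z := by
  rw [psi, if_neg (by simp), show (2 * p + 1) / 2 = p by omega, zpow_neg, zpow_natCast]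

lemma psi_two_mul_add_one_eq (hz : z ≠ 0) :
    psi c (2 * p + 1) z = z * psi c (2 * p) z⁻¹ - c (2 * p) * psi c (2 * p) z := by
  rw [psi_two_mul_add_one, psi_two_mul, psi_two_mul, Phi, inv_inv, inv_pow, pow_mul' z 2 p]
  field_simp

lemma psi_two_mul_add_two_eq (hz : z ≠ 0) :
    psi c (2 * p + 2) z = psi c (2 * p + 1) z⁻¹ - c (2 * p + 1) * psi c (2 * p + 1) z := by
  rw [show 2 * p + 2 = 2 * (p + 1) by ring, psi_two_mul, psi_two_mul_add_one,
    psi_two_mul_add_one, show 2 * (p + 1) = 2 * p + 1 + 1 by ring, Phi, inv_inv, inv_pow,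
    inv_pow, inv_inv, pow_succ z (2 * p), pow_mul' z 2 p, pow_succ z p]
  field_simp

lemma differentiableOn_psi (n : ℕ) : DifferentiableOn ℂ (psi c n) {0}ᶜ := by
  have hinv {f : ℂ → ℂ} (hf : DifferentiableOn ℂ f {0}ᶜ) :
      DifferentiableOn ℂ (fun z => f z⁻¹) {0}ᶜ :=
    hf.comp differentiableOn_inv fun z hz => inv_ne_zero hz
  induction n with
  | zero => exact (differentiableOn_const 1).congr fun z _ => psi_zero c z
  | succ n ih =>
    obtain ⟨p, rfl | rfl⟩ := Nat.even_or_odd' n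
    · exact ((differentiableOn_id.mul (hinv ih)).sub (ih.const_mul _)).congr
        fun z hz => psi_two_mul_add_one_eq c p hz
    · exact ((hinv ih).sub (ih.const_mul _)).congr fun z hz => psi_two_mul_add_two_eq c p hz

end CMV

section Jacobi

variable {α β : ℝ}

lemma jacobiA_two_mul_mul {p : ℕ} (h : ((2 * p : ℕ) : ℝ) + α + β + 2 ≠ 0) :
    (jacobiA α β (2 * p) : ℂ) * (1 + ((α : ℂ) + β + 1) + 2 * p) = -((α : ℂ) - β) := by
  have hreal : jacobiA α β (2 * p) * (1 + (α + β + 1) + 2 * p) = -(α - β) := by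
    rw [jacobiA, (even_two_mul p).add_one.neg_one_pow, div_mul_eq_mul_div, div_eq_iff h]
    push_cast
    ring
  exact_mod_cast hreal

lemma jacobiA_two_mul_add_one_mul {p : ℕ} (h : ((2 * p + 1 : ℕ) : ℝ) + α + β + 2 ≠ 0) :
    (jacobiA α β (2 * p + 1) : ℂ) * (2 * p + 2 + ((α : ℂ) + β + 1)) = -((α : ℂ) + β + 1) := by
  have hreal : jacobiA α β (2 * p + 1) * (2 * p + 2 + (α + β + 1)) = -(α + β + 1) := by
    rw [jacobiA, (odd_two_mul_add_one p).add_one.neg_one_pow, div_mul_eq_mul_div, div_eq_iff h]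
    push_cast
    ring
  exact_mod_cast hreal

lemma Lop_one_psi_jacobiA_odd_of_even {p : ℕ} (hp : ((2 * p : ℕ) : ℝ) + α + β + 2 ≠ 0)
    (h : ∀ w ∈ regularSet 1,
      Lop α β 1 (psi (jacobiA α β) (2 * p)) w = -p * psi (jacobiA α β) (2 * p) w)
    {w : ℂ} (hw : w ∈ regularSet 1) :
    Lop α β 1 (psi (jacobiA α β) (2 * p + 1)) w =
      (p + 1 + ((α : ℂ) + β + 1)) * psi (jacobiA α β) (2 * p + 1) w := by
  rw [Lop_congr (fun y hy => psi_two_mul_add_one_eq _ p hy.1) hw,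
    Lop_one_id_mul_comp_inv_sub_const_mul (differentiableOn_psi _ _) h
      (by linear_combination jacobiA_two_mul_mul hp) hw,
    psi_two_mul_add_one_eq _ p hw.1]
  ring

lemma Lop_one_psi_jacobiA_two_mul (hαβ : ∀ k : ℕ, (k : ℝ) + α + β + 2 ≠ 0) (p : ℕ) :
    ∀ w ∈ regularSet 1,
      Lop α β 1 (psi (jacobiA α β) (2 * p)) w = -p * psi (jacobiA α β) (2 * p) w := by
  induction p with
  | zero =>
    intro w hw
    have hd : deriv (fun _ : ℂ => (1 : ℂ)) w = 0 := by simp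
    rw [Lop_congr (fun y _ => psi_zero _ y) hw, Lop_one_apply, hd]
    simp
  | succ p ih =>
    intro w hw
    rw [show 2 * (p + 1) = 2 * p + 2 by ring,
      Lop_congr (fun y hy => psi_two_mul_add_two_eq _ p hy.1) hw,
      Lop_one_comp_inv_sub_const_mul (differentiableOn_psi _ _)
        (fun y hy => Lop_one_psi_jacobiA_odd_of_even (hαβ (2 * p)) ih hy)
        (by linear_combination -jacobiA_two_mul_add_one_mul (hαβ (2 * p + 1))) hw,
      psi_two_mul_add_two_eq _ p hw.1]
    push_cast
    ring

lemma Lop_one_psi_jacobiA_two_mul_add_one (hαβ : ∀ k : ℕ, (k : ℝ) + α + β + 2 ≠ 0) (p : ℕ) :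
    ∀ w ∈ regularSet 1,
      Lop α β 1 (psi (jacobiA α β) (2 * p + 1)) w =
        (p + 1 + ((α : ℂ) + β + 1)) * psi (jacobiA α β) (2 * p + 1) w :=
  fun _ => Lop_one_psi_jacobiA_odd_of_even (hαβ (2 * p)) (Lop_one_psi_jacobiA_two_mul hαβ p)

end Jacobi

/-- The function `z^s F(z^N)`, on which `L(N)` acts through the action of `L(1)` on `F`. -/
noncomputable def sieve (N : ℕ) (s : ℤ) (F : ℂ → ℂ) (z : ℂ) : ℂ := z ^ s * F (z ^ N)

section Sieve

variable {α β : ℝ} {N : ℕ} {s : ℤ} {F G : ℂ → ℂ} {l κ z : ℂ}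

lemma sieve_inv (N : ℕ) (s : ℤ) (F : ℂ → ℂ) (z : ℂ) :
    sieve N s F z⁻¹ = sieve N (-s) (fun y => F y⁻¹) z := by
  simp only [sieve, inv_zpow', inv_pow]

lemma sieve_qN_pow_div (k : ℕ) :
    sieve N s F (qN N ^ k / z) = (qN N ^ k) ^ s * (z ^ (-s) * F (z ^ N)⁻¹) := by
  rw [sieve, div_zpow, div_pow, qN_pow_pow_eq_one, one_div, zpow_neg]
  ring

lemma hasDerivAt_sieve (hz : z ≠ 0) (hF : DifferentiableAt ℂ F (z ^ N)) :
    HasDerivAt (sieve N s F)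
      (s * z ^ (s - 1) * F (z ^ N) + z ^ s * (deriv F (z ^ N) * (N * z ^ (N - 1)))) z :=
  (hasDerivAt_zpow s z (Or.inl hz)).mul (hF.hasDerivAt.comp z (hasDerivAt_pow N z))

lemma differentiableOn_sieve (hF : DifferentiableOn ℂ F {0}ᶜ) :
    DifferentiableOn ℂ (sieve N s F) {0}ᶜ := fun _ hz =>
  (hasDerivAt_sieve hz (hF.differentiableAt (isOpen_compl_singleton.mem_nhds
    (pow_ne_zero N hz)))).differentiableAt.differentiableWithinAt

lemma mul_deriv_sieve (hz : z ≠ 0) (hF : DifferentiableAt ℂ F (z ^ N)) :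
    z * deriv (sieve N s F) z = z ^ s * (s * F (z ^ N) + N * (z ^ N * deriv F (z ^ N))) := by
  rcases eq_or_ne N 0 with rfl | hN
  · rw [(hasDerivAt_sieve hz hF).deriv, zpow_sub_one₀ hz]
    field_simp
    simp
  rw [(hasDerivAt_sieve hz hF).deriv, zpow_sub_one₀ hz, ← pow_sub_one_mul hN z]
  field_simp

lemma Bfun_eq_mul_Bfun_one (α β : ℝ) (N : ℕ) (z : ℂ) :
    Bfun α β N z = N * Bfun α β 1 (z ^ N) := by
  simp only [Bfun, pow_mul', pow_one, Nat.cast_one, one_mul, mul_one]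
  ring

lemma Lop_sieve (hz : z ∈ regularSet N) (hF : DifferentiableAt ℂ F (z ^ N))
    (hM : coefMoment α β N s z = z ^ (2 * s) * (κ - Bfun α β N z)) :
    Lop α β N (sieve N s F) z =
      z ^ s * (s * F (z ^ N) + N * Lop α β 1 F (z ^ N) + κ * F (z ^ N)⁻¹) := by
  have hM0 : coefMoment α β N 0 z = -Bfun α β N z := by
    simpa using coefMoment_natCast α β (r := 0) hz N.zero_le
  have hrefl : ∑ k ∈ range N, Acoef α β N k z * (sieve N s F (qN N ^ k / z) - sieve N s F z) =
      coefMoment α β N s z * (z ^ (-s) * F (z ^ N)⁻¹) - coefMoment α β N 0 z * sieve N s F z := by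
    simp only [coefMoment, sum_mul, ← sum_sub_distrib]
    exact sum_congr rfl fun k _ => by rw [sieve_qN_pow_div, zpow_zero]; ring
  have hzs : z ^ (2 * s) * z ^ (-s) = z ^ s := by
    rw [← zpow_add₀ hz.1]
    ring_nf
  rw [Lop, mul_deriv_sieve hz.1 hF, hrefl, hM, hM0, Lop_one_apply, Bfun_eq_mul_Bfun_one, sieve]
  linear_combination (κ - N * Bfun α β 1 (z ^ N)) * F (z ^ N)⁻¹ * hzs

lemma Lop_sieve_neg_of_eigen (hG : DifferentiableOn ℂ G {0}ᶜ)
    (hLG : ∀ w ∈ regularSet 1, Lop α β 1 G w = l * G w) {r : ℕ} (hr : 2 * r ≤ N)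
    (hz : z ∈ regularSet N) :
    Lop α β N (sieve N (-r) G) z = (N * l - r) * sieve N (-r) G z +
      (if 2 * r = N then -(N * ((α : ℂ) - β)) else 0) * sieve N r (fun y => G y⁻¹) z := by
  have hw := pow_mem_regularSet_one hz
  rw [Lop_sieve hz (hG.differentiableAt (isOpen_compl_singleton.mem_nhds hw.1))
    (coefMoment_neg_natCast α β hz hr), hLG _ hw, sieve, sieve]
  split_ifs with h
  · have hzr : z ^ (-r : ℤ) * z ^ N = z ^ (r : ℤ) := by
      rw [← zpow_natCast z N, ← zpow_add₀ hz.1, ← h]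
      congr 1
      omega
    push_cast
    linear_combination -(N * ((α : ℂ) - β)) * G (z ^ N)⁻¹ * hzr
  · push_cast
    ring

lemma Lop_sieve_comp_inv_of_eigen (hG : DifferentiableOn ℂ G {0}ᶜ)
    (hLG : ∀ w ∈ regularSet 1, Lop α β 1 G w = l * G w) {r : ℕ} (hr : 2 * r ≤ N)
    (hz : z ∈ regularSet N) :
    Lop α β N (sieve N r fun y => G y⁻¹) z =
      (N * ((α : ℂ) + β + 1) - (N * l - r)) * sieve N r (fun y => G y⁻¹) z +
      (if r = 0 then -(N * ((α : ℂ) + β + 1)) else 0) * sieve N (-r) G z := by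
  have hw := pow_mem_regularSet_one hz
  have hw' := inv_mem_regularSet hw
  have hGw := hG.differentiableAt (isOpen_compl_singleton.mem_nhds hw'.1)
  rw [Lop_sieve (F := fun y => G y⁻¹) hz (hGw.comp _ (differentiableAt_inv hw.1))
    (coefMoment_natCast α β hz hr), Lop_one_comp_inv hw hGw, hLG _ hw', sieve, sieve]
  split_ifs with h
  · subst h
    simp
    ring
  · simp only [inv_inv]
    push_cast
    ring

theorem Lop_Lop_sieve_of_eigen (hG : DifferentiableOn ℂ G {0}ᶜ)
    (hLG : ∀ w ∈ regularSet 1, Lop α β 1 G w = l * G w) {r : ℕ} (hr : 2 * r ≤ N)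
    {x y : ℂ} {u : ℂ → ℂ}
    (hu : Set.EqOn u (fun z => x * sieve N r (fun w => G w⁻¹) z + y * sieve N (-r) G z)
      (regularSet N)) (hz : z ∈ regularSet N) :
    Lop α β N (Lop α β N u) z - N * ((α : ℂ) + β + 1) * Lop α β N u z =
      -((N * l - r) * (N * ((α : ℂ) + β + 1) - (N * l - r))) * u z := by
  have hGinv : DifferentiableOn ℂ (fun y => G y⁻¹) {0}ᶜ :=
    hG.comp differentiableOn_inv fun y hy => inv_ne_zero hy
  have hcouple : (if r = 0 then -(N * ((α : ℂ) + β + 1)) else 0) *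
      (if 2 * r = N then -(N * ((α : ℂ) - β)) else 0) = 0 := by
    have hN := ne_zero_of_mem_regularSet hz
    split_ifs <;> first | omega | simp
  have hCH := Lop_Lop_sub_trace_mul_Lop (differentiableOn_sieve hGinv)
    (differentiableOn_sieve hG) (fun z hz => Lop_sieve_comp_inv_of_eigen hG hLG hr hz)
    (fun z hz => Lop_sieve_neg_of_eigen hG hLG hr hz) hu hz
  rw [hcouple] at hCH
  linear_combination hCH

end Sieve

section SievedVerblunsky

variable {α β : ℝ} {N : ℕ} {z : ℂ}

lemma Phi_add_of_eq_zero {c : ℕ → ℝ} {m j : ℕ} (hc : ∀ i < j, c (m + i) = 0) (z : ℂ) :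
    Phi c (m + j) z = z ^ j * Phi c m z := by
  induction j with
  | zero => simp
  | succ j ih =>
    rw [← add_assoc, Phi, hc j j.lt_succ_self, ih fun i hi => hc i (hi.trans j.lt_succ_self)]
    push_cast
    ring

lemma sievedA_mul_add_of_lt (α β : ℝ) (m : ℕ) {j : ℕ} (hj : j + 1 < N) :
    sievedA α β N (N * m + j) = 0 := by
  refine if_neg fun hd => ?_
  rw [add_assoc, Nat.dvd_add_right (dvd_mul_right N m)] at hd
  exact hj.not_ge (Nat.le_of_dvd j.succ_pos hd)

lemma sievedA_mul_add_self (α β : ℝ) (M m : ℕ) :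
    sievedA α β (M + 1) ((M + 1) * m + M) = jacobiA α β m := by
  rw [sievedA, show (M + 1) * m + M + 1 = (M + 1) * (m + 1) by ring, if_pos (dvd_mul_right _ _),
    Nat.mul_div_cancel_left _ M.succ_pos, Nat.add_sub_cancel]

lemma Phi_sievedA_mul_add (α β : ℝ) (m : ℕ) {j : ℕ} (hj : j < N) (z : ℂ) :
    Phi (sievedA α β N) (N * m + j) z = z ^ j * Phi (sievedA α β N) (N * m) z :=
  Phi_add_of_eq_zero (fun _ hi => sievedA_mul_add_of_lt α β m (by omega)) z

lemma Phi_sievedA_mul (α β : ℝ) (hN : N ≠ 0) (m : ℕ) (hz : z ≠ 0) :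
    Phi (sievedA α β N) (N * m) z = Phi (jacobiA α β) m (z ^ N) := by
  induction m generalizing z with
  | zero => simp [Phi]
  | succ m ih =>
    obtain ⟨M, rfl⟩ := Nat.exists_eq_add_one_of_ne_zero hN
    rw [show (M + 1) * (m + 1) = (M + 1) * m + M + 1 by ring, Phi,
      sievedA_mul_add_self, Phi_sievedA_mul_add α β m M.lt_succ_self,
      Phi_sievedA_mul_add α β m M.lt_succ_self, ih hz, ih (inv_ne_zero hz), Phi,
      inv_pow, inv_pow, pow_add z ((M + 1) * m) M, pow_mul]
    field_simp
    ring

lemma psi_sievedA_of_eq_mul_add {n p r : ℕ} (hn : n + 1 = N * p + r) (hr : 0 < r)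
    (hr' : 2 * r ≤ N) (hz : z ≠ 0) :
    psi (sievedA α β N) (2 * n + 1) z =
      sieve N r (fun y => psi (jacobiA α β) (2 * p) y⁻¹) z := by
  have hidx : 2 * n + 1 = N * (2 * p) + (2 * r - 1) := by
    rw [mul_left_comm]
    omega
  have hexp : (z ^ n)⁻¹ * z ^ (2 * r - 1) = z ^ r * (z ^ N)⁻¹ ^ p := by
    rw [inv_pow, ← pow_mul, inv_mul_eq_div, ← div_eq_mul_inv,
      div_eq_div_iff (pow_ne_zero n hz) (pow_ne_zero _ hz), ← pow_add, ← pow_add]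
    congr 1
    omega
  rw [psi_two_mul_add_one, hidx,
    Phi_sievedA_mul_add α β _ (by omega), Phi_sievedA_mul α β (by omega) _ hz, sieve,
    psi_two_mul, inv_inv, zpow_natCast, ← mul_assoc, hexp, mul_assoc]

lemma psi_sievedA_of_add_eq_mul {n p r : ℕ} (hn : n + 1 + r = N * (p + 1)) (hr : 2 * r < N)
    (hz : z ≠ 0) :
    psi (sievedA α β N) (2 * n + 1) z = sieve N (-r) (psi (jacobiA α β) (2 * p + 1)) z := by
  have hN : N * (p + 1) = N * p + N := by ring
  have hidx : 2 * n + 1 = N * (2 * p + 1) + (N - 2 * r - 1) := by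
    have : N * (2 * p + 1) = 2 * (N * p) + N := by ring
    omega
  have hexp : (z ^ n)⁻¹ * z ^ (N - 2 * r - 1) = (z ^ r)⁻¹ * ((z ^ N) ^ p)⁻¹ := by
    rw [← pow_mul, ← mul_inv, inv_mul_eq_div, div_eq_iff (pow_ne_zero n hz),
      inv_mul_eq_div, eq_div_iff (mul_ne_zero (pow_ne_zero r hz) (pow_ne_zero _ hz)), ← pow_add,
      ← pow_add]
    congr 1
    omega
  rw [psi_two_mul_add_one, hidx,
    Phi_sievedA_mul_add α β _ (by omega), Phi_sievedA_mul α β (by omega) _ hz, sieve,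
    psi_two_mul_add_one, zpow_neg, zpow_natCast, ← mul_assoc, hexp, mul_assoc]

lemma sievChi_succ_eq (α β : ℝ) (N n : ℕ) (hz : z ≠ 0) :
    sievChi α β N (n + 1) z =
      psi (sievedA α β N) (2 * n + 1) z - psi (sievedA α β N) (2 * n + 1) z⁻¹ := by
  rw [sievChi, show 2 * (n + 1) = 2 * n + 2 by ring, psi_two_mul_add_two_eq _ n hz,
    show 2 * n + 2 - 1 = 2 * n + 1 by omega]
  ring

lemma sievChi_eq_of_eq_mul_add {n p r : ℕ} (hn : n + 1 = N * p + r) (hr : 0 < r)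
    (hr' : 2 * r ≤ N) (hz : z ≠ 0) :
    sievChi α β N (n + 1) z = sieve N r (fun y => psi (jacobiA α β) (2 * p) y⁻¹) z -
      sieve N (-r) (psi (jacobiA α β) (2 * p)) z := by
  rw [sievChi_succ_eq α β N n hz, psi_sievedA_of_eq_mul_add hn hr hr' hz,
    psi_sievedA_of_eq_mul_add hn hr hr' (inv_ne_zero hz), sieve_inv]
  simp only [inv_inv]

lemma sievChi_eq_of_add_eq_mul {n p r : ℕ} (hn : n + 1 + r = N * (p + 1)) (hr : 2 * r < N)
    (hz : z ≠ 0) :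
    sievChi α β N (n + 1) z = sieve N (-r) (psi (jacobiA α β) (2 * p + 1)) z -
      sieve N r (fun y => psi (jacobiA α β) (2 * p + 1) y⁻¹) z := by
  rw [sievChi_succ_eq α β N n hz, psi_sievedA_of_add_eq_mul hn hr hz,
    psi_sievedA_of_add_eq_mul hn hr (inv_ne_zero hz), sieve_inv, neg_neg]

end SievedVerblunsky

lemma exists_eq_mul_add_or_add_eq_mul {N n : ℕ} (hN : N ≠ 0) (hn : n ≠ 0) :
    ∃ p r, n = N * p + r ∧ 0 < r ∧ 2 * r ≤ N ∨ n + r = N * (p + 1) ∧ 2 * r < N := by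
  have hdiv := Nat.div_add_mod n N
  have hlt := Nat.mod_lt n (Nat.pos_of_ne_zero hN)
  rcases Nat.eq_zero_or_pos (n % N) with h0 | hpos
  · have hp : n / N ≠ 0 := by
      intro h
      rw [h, h0, mul_zero] at hdiv
      exact hn hdiv.symm
    have hmul : n + 0 = N * (n / N - 1 + 1) := by
      rw [Nat.sub_add_cancel (Nat.pos_of_ne_zero hp)]
      omega
    exact ⟨n / N - 1, 0, Or.inr ⟨hmul, by omega⟩⟩
  rcases Nat.lt_or_ge N (2 * (n % N)) with hgt | hle
  · exact ⟨n / N, N - n % N, Or.inr ⟨by rw [mul_add]; omega, by omega⟩⟩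
  · exact ⟨n / N, n % N, Or.inl ⟨hdiv.symm, hpos, hle⟩⟩

theorem stmt_15_general (α β : ℝ) (hαβ : ∀ k : ℕ, (k : ℝ) + α + β + 2 ≠ 0) (N : ℕ)
    (n : ℕ) (hn : 1 ≤ n) (z : ℂ) (hz : z ≠ 0) (hz2 : z ^ (2 * N) ≠ 1) :
    Lop α β N (Lop α β N (sievChi α β N n)) z
      - (N : ℂ) * ((α : ℂ) + β + 1) * Lop α β N (sievChi α β N n) z
      = (n : ℂ) * ((n : ℂ) + (N : ℂ) * ((α : ℂ) + β + 1)) * sievChi α β N n z := by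
  have hmem : z ∈ regularSet N := ⟨hz, hz2⟩
  obtain ⟨m, rfl⟩ := Nat.exists_eq_add_of_le' hn
  obtain ⟨p, r, ⟨hm, hr, hr'⟩ | ⟨hm, hr⟩⟩ :=
    exists_eq_mul_add_or_add_eq_mul (ne_zero_of_mem_regularSet hmem) m.add_one_ne_zero
  · have hl : (N : ℂ) * -p - r = -((m + 1 : ℕ) : ℂ) := by
      rw [hm]
      push_cast
      ring
    rw [Lop_Lop_sieve_of_eigen (x := 1) (y := -1) (differentiableOn_psi _ _)
      (Lop_one_psi_jacobiA_two_mul hαβ p) hr'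
      (fun y hy => by rw [sievChi_eq_of_eq_mul_add hm hr hr' hy.1]; ring) hmem, hl]
    ring
  · have hm' : ((m + 1 : ℕ) : ℂ) + r = N * (p + 1) := by exact_mod_cast hm
    have hl : (N : ℂ) * (p + 1 + (α + β + 1)) - r = (m + 1 : ℕ) + N * (α + β + 1) := by
      linear_combination -hm'
    rw [Lop_Lop_sieve_of_eigen (x := -1) (y := 1) (differentiableOn_psi _ _)
      (Lop_one_psi_jacobiA_two_mul_add_one hαβ p) hr.le
      (fun y hy => by rw [sievChi_eq_of_add_eq_mul hm hr hy.1]; ring) hmem, hl]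
    ring

/-- the function χ_n(z) = -ψ_{2n}(z;N) + (1 - a_{2n-1}(N)) ψ_{2n-1}(z;N)
(equal to (z - 1/z) Q_{n-1}(x(z);N)) satisfies
(L(N)² - N(α+β+1)L(N)) χ_n = n(n + N(α+β+1)) χ_n. -/
theorem stmt_15 (α β : ℝ) (hα : -1 < α) (hβ : -1 < β) (N : ℕ) (hN : 1 ≤ N)
    (n : ℕ) (hn : 1 ≤ n) (z : ℂ) (hz : z ≠ 0) (hz2 : z ^ (2 * N) ≠ 1) :
    Lop α β N (Lop α β N (sievChi α β N n)) z
      - (N : ℂ) * ((α : ℂ) + β + 1) * Lop α β N (sievChi α β N n) z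
      = (n : ℂ) * ((n : ℂ) + (N : ℂ) * ((α : ℂ) + β + 1)) * sievChi α β N n z := by
  exact stmt_15_general α β (fun k => by linarith [k.cast_nonneg (α := ℝ)]) N n hn z hz hz2
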